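/- With f ∈ NRV_{σ+1}, σ > p - 2 > -1, F(t) = ∫_B^t f(s) ds, and 𝓕(t) = ((p-1)/p)^{1/p} ∫_t^∞ F(x)^{-1/p} dx, one has lim_{t→∞} F(t)^{(p-1)/p} / (f(t) 𝓕(t)) = (1/p) (p/(p-1))^{1/p} (1 - p/(σ+2)). -/

import Mathlib

open Filter MeasureTheory Real

theorem exists_monotoneOn_Ici_of_eventually_hasDerivAt_nonneg {f f' : ℝ → ℝ}
    (hf : ∀ᶠ x in atTop, HasDerivAt f (f' x) x) (hf' : ∀ᶠ x in atTop, 0 ≤ f' x) :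
    ∃ a, MonotoneOn f (Set.Ici a) := by
  obtain ⟨a, ha⟩ := eventually_atTop.1 (hf.and hf')
  refine ⟨a, monotoneOn_of_hasDerivWithinAt_nonneg (f' := f') (convex_Ici a)
    (fun x hx => (ha x hx).1.continuousAt.continuousWithinAt) (fun x hx => ?_) (fun x hx => ?_)⟩
  · exact (ha x (interior_subset hx)).1.hasDerivWithinAt
  · exact (ha x (interior_subset hx)).2

theorem eventually_lt_div_of_tendsto_deriv_div {f f' g g' : ℝ → ℝ} {L d : ℝ}
    (hf : ∀ᶠ x in atTop, HasDerivAt f (f' x) x) (hg : ∀ᶠ x in atTop, HasDerivAt g (g' x) x)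
    (hg' : ∀ᶠ x in atTop, 0 < g' x) (hgt : Tendsto g atTop atTop)
    (h : Tendsto (fun x => f' x / g' x) atTop (nhds L)) (hd : d < L) :
    ∀ᶠ x in atTop, d < f x / g x := by
  obtain ⟨c, hdc, hcL⟩ := exists_between hd
  obtain ⟨a, ha⟩ := exists_monotoneOn_Ici_of_eventually_hasDerivAt_nonneg
    (f := fun x => f x - c * g x) (f' := fun x => f' x - c * g' x)
    (by filter_upwards [hf, hg] with x h1 h2 using h1.sub (h2.const_mul c))
    (by
      filter_upwards [hg', h.eventually_const_lt hcL] with x h1 h2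
      rw [lt_div_iff₀ h1] at h2
      linarith)
  have hbig : ∀ᶠ x in atTop, -(f a - c * g a) < (c - d) * g x :=
    (hgt.const_mul_atTop (sub_pos.2 hdc)).eventually_gt_atTop _
  filter_upwards [hbig, eventually_ge_atTop a, hgt.eventually_gt_atTop 0] with x h1 h2 h3
  have h4 := ha Set.self_mem_Ici h2 h2
  rw [lt_div_iff₀ h3]
  simp only at h4
  linarith

/-- The limit of a ratio of derivatives is the limit of the ratio when the denominator tends to
infinity. -/
theorem tendsto_div_of_tendsto_deriv_div_of_tendsto_atTop {f f' g g' : ℝ → ℝ} {L : ℝ}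
    (hf : ∀ᶠ x in atTop, HasDerivAt f (f' x) x) (hg : ∀ᶠ x in atTop, HasDerivAt g (g' x) x)
    (hg' : ∀ᶠ x in atTop, 0 < g' x) (hgt : Tendsto g atTop atTop)
    (h : Tendsto (fun x => f' x / g' x) atTop (nhds L)) :
    Tendsto (fun x => f x / g x) atTop (nhds L) := by
  refine tendsto_order.2 ⟨fun d hd => eventually_lt_div_of_tendsto_deriv_div hf hg hg' hgt h hd,
    fun d hd => ?_⟩
  have h' : Tendsto (fun x => -f' x / g' x) atTop (nhds (-L)) := by
    simpa only [neg_div] using h.neg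
  filter_upwards [eventually_lt_div_of_tendsto_deriv_div (f := fun x => -f x)
    (hf.mono fun x hx => hx.neg) hg hg' hgt h' (neg_lt_neg hd)] with x hx
  rw [neg_div] at hx
  exact neg_lt_neg_iff.1 hx

theorem hasDerivAt_integral_of_continuousOn_Ici {f : ℝ → ℝ} {a x : ℝ}
    (hf : ContinuousOn f (Set.Ici a)) (hx : a < x) :
    HasDerivAt (fun u => ∫ t in a..u, f t) (f x) x := by
  refine intervalIntegral.integral_hasDerivAt_right ?_ ?_ (hf.continuousAt (Ici_mem_nhds hx))
  · refine (hf.mono fun y hy => ?_).intervalIntegrable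
    rw [Set.uIcc_of_le hx.le] at hy
    exact hy.1
  · exact (hf.mono Set.Ioi_subset_Ici_self).stronglyMeasurableAtFilter isOpen_Ioi x hx

theorem hasDerivAt_integral_Ioi {f : ℝ → ℝ} {a x : ℝ} (hf : ContinuousOn f (Set.Ici a))
    (hInt : IntegrableOn f (Set.Ioi a)) (hx : a < x) :
    HasDerivAt (fun u => ∫ t in Set.Ioi u, f t) (-f x) x := by
  refine ((hasDerivAt_integral_of_continuousOn_Ici hf hx).const_sub
    (∫ t in Set.Ioi a, f t)).congr_of_eventuallyEq ?_
  filter_upwards [Ioi_mem_nhds hx] with u hu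
  rw [← intervalIntegral.integral_Ioi_sub_Ioi hInt (le_of_lt hu)]
  ring

/-- A positive function whose elasticity tends to `r` dominates every power of exponent
smaller than `r`. -/
theorem exists_mul_rpow_le_of_hasDerivAt {f e : ℝ → ℝ} {r s : ℝ}
    (hf : ∀ᶠ u in atTop, HasDerivAt f (f u * e u / u) u) (hpos : ∀ᶠ u in atTop, 0 < f u)
    (he : Tendsto e atTop (nhds r)) (hs : s < r) :
    ∃ c > 0, ∀ᶠ u in atTop, c * u ^ s ≤ f u := by
  obtain ⟨a, ha⟩ := exists_monotoneOn_Ici_of_eventually_hasDerivAt_nonneg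
    (f := fun u => f u * u ^ (-s)) (f' := fun u => f u * u ^ (-s) / u * (e u - s))
    (by
      filter_upwards [hf, eventually_gt_atTop 0] with u h1 h2
      refine (h1.mul (hasDerivAt_rpow_const (Or.inl h2.ne'))).congr_deriv ?_
      rw [rpow_sub_one h2.ne']
      field_simp
      ring)
    (by
      filter_upwards [hpos, he.eventually_const_lt hs, eventually_gt_atTop 0] with u h1 h2 h3
      have := sub_pos.2 h2
      positivity)
  obtain ⟨b, hb1, hb2, hb3⟩ :=
    (hpos.and ((eventually_gt_atTop 0).and (eventually_ge_atTop a))).exists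
  refine ⟨f b * b ^ (-s), by positivity, ?_⟩
  filter_upwards [eventually_ge_atTop b, eventually_gt_atTop 0] with u h1 h2
  have h := ha hb3 (hb3.trans h1) h1
  simp only at h
  calc f b * b ^ (-s) * u ^ s ≤ f u * u ^ (-s) * u ^ s := by gcongr
    _ = f u := by rw [mul_assoc, ← rpow_add h2]; simp

theorem tendsto_atTop_of_hasDerivAt_tendsto_atTop {f f' : ℝ → ℝ}
    (hf : ∀ᶠ x in atTop, HasDerivAt f (f' x) x) (hf' : Tendsto f' atTop atTop) :
    Tendsto f atTop atTop := by
  obtain ⟨a, ha⟩ := exists_monotoneOn_Ici_of_eventually_hasDerivAt_nonneg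
    (f := fun x => f x - x) (f' := fun x => f' x - 1)
    (hf.mono fun x hx => hx.sub (hasDerivAt_id x))
    (by filter_upwards [hf'.eventually_ge_atTop 1] with x hx using sub_nonneg.2 hx)
  refine tendsto_atTop_mono' _ ?_ (tendsto_atTop_add_const_left _ (f a - a) tendsto_id)
  filter_upwards [eventually_ge_atTop a] with x hx
  have h := ha Set.self_mem_Ici hx hx
  simp only [id] at h ⊢
  linarith

theorem F_power_over_f_tail_limit
    (B A₀ p σ : ℝ) (hB : 0 < B) (hA : 0 < A₀) (hp : 1 < p) (hσ : p - 2 < σ)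
    (φ : ℝ → ℝ) (hφcont : ContinuousOn φ (Set.Ici B))
    (hφlim : Tendsto φ atTop (nhds 0))
    (f : ℝ → ℝ)
    (hf : ∀ u, B ≤ u → f u = A₀ * u ^ (σ + 1) * Real.exp (∫ t in B..u, φ t / t))
    (F : ℝ → ℝ) (hF : ∀ t, F t = ∫ s in B..t, f s)
    (𝓕 : ℝ → ℝ)
    (h𝓕 : ∀ t, 𝓕 t = ((p - 1) / p) ^ ((1:ℝ)/p) * ∫ x in Set.Ioi t, F x ^ (-(1:ℝ)/p)) :
    Tendsto (fun t => F t ^ ((p - 1) / p) / (f t * 𝓕 t)) atTop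
      (nhds ((1 / p) * (p / (p - 1)) ^ ((1:ℝ)/p) * (1 - p / (σ + 2)))) := by
  have hp0 : 0 < p := by linarith
  have hp1 : 0 < p - 1 := by linarith
  have hφdiv : ContinuousOn (fun t => φ t / t) (Set.Ici B) :=
    hφcont.div continuousOn_id fun x hx => (hB.trans_le hx).ne'
  have hfpos : ∀ u, B ≤ u → 0 < f u := fun u hu => by
    have := hB.trans_le hu
    rw [hf u hu]; positivity
  have hfcont : ContinuousOn f (Set.Ici B) := by
    have hprim : ContinuousOn (fun u => ∫ t in B..u, φ t / t) (Set.Ici B) := by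
      intro x hx
      have hI : ContinuousOn (fun u => ∫ t in B..u, φ t / t) (Set.Icc B (x + 1)) := by
        rw [← Set.uIcc_of_le (show B ≤ x + 1 from (hx.trans (by linarith)))]
        refine intervalIntegral.continuousOn_primitive_interval ?_
        rw [Set.uIcc_of_le (show B ≤ x + 1 from (hx.trans (by linarith)))]
        exact (hφdiv.mono Set.Icc_subset_Ici_self).integrableOn_Icc
      refine (hI x ⟨hx, by linarith⟩).mono_of_mem_nhdsWithin ?_
      rw [← Set.Ici_inter_Iic]
      exact inter_mem_nhdsWithin _ (Iic_mem_nhds (by linarith))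
    refine ContinuousOn.congr ?_ hf
    refine (continuousOn_const.mul ?_).mul hprim.rexp
    exact continuousOn_id.rpow_const fun x hx => Or.inl (hB.trans_le hx).ne'
  have hfderiv : ∀ u, B < u → HasDerivAt f (f u * (σ + 1 + φ u) / u) u := fun u hu => by
    have hu0 := hB.trans hu
    have h1 := ((hasDerivAt_rpow_const (p := σ + 1) (Or.inl hu0.ne')).const_mul A₀).mul
      (hasDerivAt_integral_of_continuousOn_Ici hφdiv hu).exp
    refine (h1.congr_of_eventuallyEq ?_).congr_deriv ?_
    · filter_upwards [Ioi_mem_nhds hu] with x hx using hf x (le_of_lt hx)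
    · rw [hf u hu.le, rpow_sub_one hu0.ne']
      field_simp
  have hFderiv : ∀ u, B < u → HasDerivAt F (f u) u := fun u hu => by
    rw [funext hF]
    exact hasDerivAt_integral_of_continuousOn_Ici hfcont hu
  have hfpos' : ∀ᶠ u in atTop, 0 < f u := (eventually_ge_atTop B).mono hfpos
  have hfderiv' := (eventually_gt_atTop B).mono hfderiv
  have hFderiv' := (eventually_gt_atTop B).mono hFderiv
  have helim : Tendsto (fun u => σ + 1 + φ u) atTop (nhds (σ + 1)) := by
    simpa using hφlim.const_add (σ + 1)
  obtain ⟨s, hps, hsσ⟩ := exists_between (show p - 1 < σ + 1 by linarith)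
  obtain ⟨c, hc, hcf⟩ := exists_mul_rpow_le_of_hasDerivAt hfderiv' hfpos' helim hsσ
  have hftop : Tendsto f atTop atTop :=
    tendsto_atTop_mono' _ hcf ((tendsto_rpow_atTop (by linarith)).const_mul_atTop hc)
  have hFtop : Tendsto F atTop atTop := tendsto_atTop_of_hasDerivAt_tendsto_atTop hFderiv' hftop
  have hFpos' : ∀ᶠ u in atTop, 0 < F u := hFtop.eventually_gt_atTop 0
  have hratio : Tendsto (fun u => u * f u / F u) atTop (nhds (σ + 2)) := by
    refine tendsto_div_of_tendsto_deriv_div_of_tendsto_atTop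
      (f' := fun u => f u * (σ + 2 + φ u)) ?_ hFderiv' hfpos' hFtop ?_
    · filter_upwards [hfderiv', eventually_gt_atTop 0] with u h1 h2
      refine ((hasDerivAt_id u).mul h1).congr_deriv ?_
      simp only [id]
      field_simp
      ring
    · have h : Tendsto (fun u => σ + 2 + φ u) atTop (nhds (σ + 2)) := by
        simpa using hφlim.const_add (σ + 2)
      refine h.congr' ?_
      filter_upwards [hfpos'] with u h1
      field_simp
  have hratio' : Tendsto (fun u => F u / (u * f u)) atTop (nhds (1 / (σ + 2))) := by
    simpa using hratio.inv₀ (by linarith)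
  obtain ⟨r, hpr, hrσ⟩ := exists_between (show p < σ + 2 by linarith)
  obtain ⟨d, hd, hdF⟩ : ∃ d > 0, ∀ᶠ u in atTop, d * u ^ r ≤ F u := by
    refine exists_mul_rpow_le_of_hasDerivAt ?_ hFpos' hratio hrσ
    filter_upwards [hFderiv', hFpos', eventually_gt_atTop 0] with u h1 h2 h3
    refine h1.congr_deriv ?_
    field_simp
  obtain ⟨a, ha⟩ := eventually_atTop.1
    (hdF.and (hFpos'.and ((eventually_gt_atTop B).and (eventually_gt_atTop 0))))
  have hcont : ContinuousOn (fun x => F x ^ (-(1:ℝ)/p)) (Set.Ici a) := fun x hx =>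
    (((hFderiv x (ha x hx).2.2.1).continuousAt.rpow_const
      (Or.inl (ha x hx).2.1.ne'))).continuousWithinAt
  have hInt : IntegrableOn (fun x => F x ^ (-(1:ℝ)/p)) (Set.Ioi a) := by
    have hexp : r * (-(1:ℝ)/p) < -1 := by
      rw [mul_div_assoc', div_lt_iff₀ hp0]; linarith
    refine Integrable.mono' ((integrableOn_Ioi_rpow_of_lt hexp (ha a le_rfl).2.2.2).const_mul
      (d ^ (-(1:ℝ)/p))) ((hcont.mono Set.Ioi_subset_Ici_self).aestronglyMeasurable
        measurableSet_Ioi) ?_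
    refine (ae_restrict_iff' measurableSet_Ioi).2 (Eventually.of_forall fun x hx => ?_)
    obtain ⟨h1, h2, -, h4⟩ := ha x (le_of_lt hx)
    rw [norm_of_nonneg (by positivity), rpow_mul h4.le, ← mul_rpow hd.le (by positivity)]
    refine rpow_le_rpow_of_nonpos (by positivity) h1 ?_
    rw [neg_div, neg_nonpos]; positivity
  have hnum : Tendsto (fun t => F t ^ ((p - 1) / p) / f t) atTop (nhds 0) := by
    have h1 : Tendsto (fun t => t ^ (p - 1) / f t) atTop (nhds 0) := by
      have h2 : Tendsto (fun t : ℝ => c⁻¹ * t ^ (-(s - (p - 1)))) atTop (nhds 0) := by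
        simpa using (tendsto_rpow_neg_atTop (sub_pos.2 hps)).const_mul c⁻¹
      refine squeeze_zero' ?_ ?_ h2
      · filter_upwards [hfpos', eventually_gt_atTop 0] with t h3 h4
        positivity
      · filter_upwards [hfpos', hcf, eventually_gt_atTop 0] with t h3 h5 h4
        rw [div_le_iff₀ h3]
        calc t ^ (p - 1) = c⁻¹ * t ^ (-(s - (p - 1))) * (c * t ^ s) := by
              rw [mul_mul_mul_comm, inv_mul_cancel₀ hc.ne', ← rpow_add h4]
              simp
          _ ≤ _ := by gcongr
    have h2 := (hratio'.rpow_const (p := (p - 1) / p) (Or.inr (by positivity))).mul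
      (h1.rpow_const (p := 1 / p) (Or.inr (by positivity)))
    rw [zero_rpow (by positivity), mul_zero] at h2
    refine h2.congr' ?_
    filter_upwards [hfpos', hFpos', eventually_gt_atTop 0] with t h3 h4 h5
    have hsplit : f t = f t ^ ((p - 1) / p) * f t ^ (1 / p) := by
      rw [← rpow_add h3, ← add_div, sub_add_cancel, div_self hp0.ne', rpow_one]
    have ht := (rpow_pos_of_pos h5 ((p - 1) / p)).ne'
    rw [div_rpow h4.le (by positivity), div_rpow (by positivity) h3.le,
      mul_rpow h5.le h3.le, ← rpow_mul h5.le, mul_one_div, div_mul_div_comm, mul_assoc,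
      ← hsplit, mul_comm, mul_div_mul_left _ _ ht]
  have hfrac : 0 < (p - 1) / p := by positivity
  have hkpos : 0 < ((p - 1) / p) ^ ((1:ℝ)/p) := by positivity
  have hconst : (1 / p) * (p / (p - 1)) ^ ((1:ℝ)/p) * (1 - p / (σ + 2)) =
      ((p - 1) / p - 1 / (σ + 2) * (σ + 1)) / -((p - 1) / p) ^ ((1:ℝ)/p) := by
    have : σ + 2 ≠ 0 := by linarith
    rw [← inv_div (p - 1) p, inv_rpow hfrac.le]
    field_simp
    ring
  simp_rw [← div_div]
  rw [hconst]
  refine HasDerivAt.lhopital_zero_atTop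
    (f' := fun t => F t ^ (-(1:ℝ)/p) * ((p - 1) / p - F t / (t * f t) * (σ + 1 + φ t)))
    (g' := fun t => ((p - 1) / p) ^ ((1:ℝ)/p) * -F t ^ (-(1:ℝ)/p)) ?_ ?_ ?_ hnum ?_ ?_
  · filter_upwards [hfderiv', hFderiv', hfpos', hFpos', eventually_gt_atTop 0] with t h1 h2 h3 h4 h5
    refine ((h2.rpow_const (Or.inl h4.ne')).div h1 h3.ne').congr_deriv ?_
    have e1 : (p - 1) / p - 1 = -(1:ℝ) / p := by field_simp; ring
    have e2 : F t ^ ((p - 1) / p) = F t ^ (-(1:ℝ)/p) * F t := by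
      rw [← rpow_add_one h4.ne', ← e1]; simp
    rw [e1, e2]
    field_simp
  · filter_upwards [eventually_gt_atTop a] with t ht
    rw [funext h𝓕]
    exact (hasDerivAt_integral_Ioi hcont hInt ht).const_mul _
  · filter_upwards [hFpos'] with t h1
    have := rpow_pos_of_pos h1 (-(1:ℝ)/p)
    exact (mul_neg_of_pos_of_neg hkpos (neg_neg_of_pos this)).ne
  · rw [funext h𝓕]
    simpa using (tendsto_integral_Ioi_zero tendsto_id).const_mul (((p - 1) / p) ^ ((1:ℝ)/p))
  · refine (((hratio'.mul helim).const_sub ((p - 1) / p)).div_const _).congr' ?_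
    filter_upwards [hFpos'] with t h1
    have := (rpow_pos_of_pos h1 (-(1:ℝ)/p)).ne'
    rw [mul_neg, ← neg_mul, mul_comm (-_), mul_div_mul_left _ _ this]
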